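/- For every γ ∈ (1,2) and every N ≥ 1, with P_γ = Q_γ·τ(Â_γ), the matrix P_γ is symmetric positive definite, for every nonzero y ∈ ℝ^N one has (3/8)·yᵀ P_γ y < yᵀ A_γ y < 2·yᵀ P_γ y, and every eigenvalue λ of P_γ^{−1} A_γ satisfies 3/8 < λ < 2. -/

import Mathlib

open Matrix

/-- The fourth-order coefficients `s_k^{(γ)}`. -/
noncomputable def sCoef (γ : ℝ) (k : ℤ) : ℝ :=
  ((-1 : ℝ) ^ k * Real.Gamma (γ + 1) /
      (Real.Gamma (γ / 2 - k + 1) * Real.Gamma (γ / 2 + k + 1))) *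
    (1 + γ * (γ + 1) * (γ + 2) / (6 * (γ - 2 * k + 2) * (γ + 2 * k + 2)))

/-- `A_γ`: the symmetric Toeplitz matrix with `(i,j)` entry `s_{i-j}^{(γ)}`. -/
noncomputable def Amat (γ : ℝ) (N : ℕ) : Matrix (Fin N) (Fin N) ℝ :=
  fun i j => sCoef γ ((i : ℤ) - (j : ℤ))

/-- The second-order coefficients `g_k^{(γ)}`. -/
noncomputable def gCoef (γ : ℝ) (k : ℤ) : ℝ :=
  (-1 : ℝ) ^ k * Real.Gamma (γ + 1) /
    (Real.Gamma (γ / 2 - k + 1) * Real.Gamma (γ / 2 + k + 1))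

/-- `Â_γ`: the symmetric Toeplitz matrix with `(i,j)` entry `g_{i-j}^{(γ)}`. -/
noncomputable def Ahat (γ : ℝ) (N : ℕ) : Matrix (Fin N) (Fin N) ℝ :=
  fun i j => gCoef γ ((i : ℤ) - (j : ℤ))

/-- τ part of the symmetric Toeplitz matrix with first column `t 0, …, t (N-1)`:
with 1-based indices `i, j ∈ {1,…,N}` (here `i.val + 1`, `j.val + 1`) and the
convention `t m = 0` for `m ≥ N`, the `(i,j)` entry is
`t |i-j| - t (i+j) - t (2(N+1)-i-j)`. -/
noncomputable def tauOf (N : ℕ) (t : ℕ → ℝ) : Matrix (Fin N) (Fin N) ℝ :=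
  fun i j =>
    (fun m => if m < N then t m else 0) ((i : ℤ) - (j : ℤ)).natAbs -
    (fun m => if m < N then t m else 0) (((i : ℕ) + 1) + ((j : ℕ) + 1)) -
    (fun m => if m < N then t m else 0) (2 * (N + 1) - ((i : ℕ) + 1) - ((j : ℕ) + 1))

/-- `τ(Â_γ)`. -/
noncomputable def tauAhat (γ : ℝ) (N : ℕ) : Matrix (Fin N) (Fin N) ℝ :=
  tauOf N (fun m => gCoef γ (m : ℤ))

/-- The tridiagonal matrix with `2` on the diagonal and `-1` on the sub/superdiagonals. -/
def triDiag (N : ℕ) : Matrix (Fin N) (Fin N) ℝ :=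
  fun i j =>
    if (i : ℤ) = (j : ℤ) then 2
    else if ((i : ℤ) - (j : ℤ)).natAbs = 1 then -1 else 0

/-- `Q_γ = I_N + (γ/24)·T_N`. -/
noncomputable def Qmat (γ : ℝ) (N : ℕ) : Matrix (Fin N) (Fin N) ℝ :=
  1 + (γ / 24) • triDiag N

/-- `P_γ = Q_γ · τ(Â_γ)`. -/
noncomputable def Pmat (γ : ℝ) (N : ℕ) : Matrix (Fin N) (Fin N) ℝ :=
  Qmat γ N * tauAhat γ N

section scalar

variable {γ : ℝ}

lemma half_ne (hγ : γ ∈ Set.Ioo (1 : ℝ) 2) (k : ℤ) : γ / 2 + k ≠ 0 := by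
  obtain ⟨h1, h2⟩ := hγ
  intro h
  have h3 : ((-1 : ℤ) : ℝ) < (k : ℝ) := by push_cast; linarith
  have h4 : (k : ℝ) < ((0 : ℤ) : ℝ) := by push_cast; linarith
  have h5 := Int.cast_lt.mp h3
  have h6 := Int.cast_lt.mp h4
  omega

lemma Gamma_half_ne (hγ : γ ∈ Set.Ioo (1 : ℝ) 2) (k : ℤ) : Real.Gamma (γ / 2 + k) ≠ 0 := by
  apply Real.Gamma_ne_zero
  intro m h
  apply half_ne hγ (k + m)
  push_cast
  linarith

lemma gCoef_neg (γ : ℝ) (k : ℤ) : gCoef γ (-k) = gCoef γ k := by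
  unfold gCoef
  have : (-1 : ℝ) ^ (-k) = (-1) ^ k := by
    rw [_root_.zpow_neg]; rcases Int.even_or_odd k with h | h
    · simp [h.neg_one_zpow]
    · simp [h.neg_one_zpow]
  rw [this]
  push_cast
  rw [sub_neg_eq_add, ← sub_eq_add_neg, mul_comm (Real.Gamma (γ / 2 + k + 1))]

lemma gCoef_rec (hγ : γ ∈ Set.Ioo (1 : ℝ) 2) (k : ℤ) :
    (γ / 2 + k + 1) * gCoef γ (k + 1) = (k - γ / 2) * gCoef γ k := by
  unfold gCoef
  have a1 : Real.Gamma (γ / 2 - k + 1) = (γ / 2 - k) * Real.Gamma (γ / 2 - k) := by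
    apply Real.Gamma_add_one
    have := half_ne hγ (-k); push_cast at this; rwa [← sub_eq_add_neg] at this
  have a2 : Real.Gamma (γ / 2 + (k + 1 : ℤ) + 1)
      = (γ / 2 + k + 1) * Real.Gamma (γ / 2 + k + 1) := by
    rw [Real.Gamma_add_one (half_ne hγ (k + 1))]; push_cast; ring_nf
  have a3 : γ / 2 - ((k + 1 : ℤ) : ℝ) + 1 = γ / 2 - k := by push_cast; ring
  have n1 : γ / 2 - k ≠ 0 := by
    have := half_ne hγ (-k); push_cast at this; rwa [← sub_eq_add_neg] at this
  have n2 : γ / 2 + k + 1 ≠ 0 := by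
    have := half_ne hγ (k + 1); push_cast at this; rwa [← add_assoc] at this
  have n3 : Real.Gamma (γ / 2 - k) ≠ 0 := by
    have := Gamma_half_ne hγ (-k); push_cast at this; rwa [← sub_eq_add_neg] at this
  have n4 : Real.Gamma (γ / 2 + k + 1) ≠ 0 := by
    have := Gamma_half_ne hγ (k + 1); push_cast at this; rwa [← add_assoc] at this
  rw [a1, a2, a3, zpow_add_one₀ (by norm_num),
    show (k : ℝ) - γ / 2 = -(γ / 2 - k) by ring]
  generalize Real.Gamma (γ / 2 - k) = c1 at *
  generalize Real.Gamma (γ / 2 + k + 1) = c2 at *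
  generalize γ / 2 - (k : ℝ) = u at *
  generalize γ / 2 + (k : ℝ) + 1 = v at *
  field_simp

lemma gCoef_zero_pos (hγ : γ ∈ Set.Ioo (1 : ℝ) 2) : 0 < gCoef γ 0 := by
  obtain ⟨h1, h2⟩ := hγ
  unfold gCoef
  have := Real.Gamma_pos_of_pos (s := γ + 1) (by linarith)
  have := Real.Gamma_pos_of_pos (s := γ / 2 + 1) (by linarith)
  simp only [Int.cast_zero, sub_zero, add_zero, zpow_zero]
  positivity

lemma gCoef_succ_neg (hγ : γ ∈ Set.Ioo (1 : ℝ) 2) (n : ℕ) : gCoef γ ((n : ℤ) + 1) < 0 := by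
  have h1 := hγ.1
  have h2 := hγ.2
  induction n with
  | zero =>
    have := gCoef_rec hγ 0
    have h0 := gCoef_zero_pos hγ
    simp only [Int.cast_zero, add_zero, zero_sub, zero_add] at this
    simp only [Nat.cast_zero, zero_add]
    by_contra h
    push Not at h
    nlinarith [mul_nonneg (show 0 ≤ γ / 2 + 1 by linarith) h]
  | succ n ih =>
    have := gCoef_rec hγ (n + 1)
    push_cast at this ⊢
    by_contra h
    push Not at h
    have hn : (0 : ℝ) ≤ n := Nat.cast_nonneg n
    have : 0 ≤ (γ / 2 + (n + 1) + 1) * gCoef γ ((n : ℤ) + 1 + 1) :=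
      mul_nonneg (by linarith) h
    have : ((n : ℝ) + 1 - γ / 2) * gCoef γ ((n : ℤ) + 1) < 0 :=
      mul_neg_of_pos_of_neg (by linarith) ih
    linarith

lemma gCoef_neg_of_pos (hγ : γ ∈ Set.Ioo (1 : ℝ) 2) {k : ℤ} (hk : 0 < k) : gCoef γ k < 0 := by
  obtain ⟨n, rfl⟩ : ∃ n : ℕ, k = n + 1 := ⟨(k - 1).toNat, by omega⟩
  exact gCoef_succ_neg hγ n

lemma gCoef_mono_step (hγ : γ ∈ Set.Ioo (1 : ℝ) 2) {k : ℤ} (hk : 0 < k) :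
    gCoef γ k ≤ gCoef γ (k + 1) := by
  have h1 := hγ.1
  have h2 := hγ.2
  have hr := gCoef_rec hγ k
  have hn := gCoef_neg_of_pos hγ hk
  have hk' : (1 : ℝ) ≤ k := by exact_mod_cast hk
  by_contra h
  push Not at h
  nlinarith [mul_lt_mul_of_pos_left h (show 0 < γ / 2 + k + 1 by linarith)]

lemma gCoef_mono (hγ : γ ∈ Set.Ioo (1 : ℝ) 2) {k l : ℤ} (hk : 0 < k) (hl : k ≤ l) :
    gCoef γ k ≤ gCoef γ l := by
  induction l, hl using Int.leInduction with
  | base => exact le_rfl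
  | succ l hl ih => exact ih.trans (gCoef_mono_step hγ (by omega))

/-- absolute values of the off-diagonal coefficients -/
noncomputable def aC (γ : ℝ) (k : ℤ) : ℝ := if k = 0 then 0 else - gCoef γ k

lemma aC_neg (γ : ℝ) (k : ℤ) : aC γ (-k) = aC γ k := by
  simp [aC, gCoef_neg]

lemma aC_nonneg (hγ : γ ∈ Set.Ioo (1 : ℝ) 2) (k : ℤ) : 0 ≤ aC γ k := by
  unfold aC
  split_ifs with h
  · exact le_rfl
  · rcases lt_or_gt_of_ne h with h' | h'
    · rw [← gCoef_neg]; linarith [gCoef_neg_of_pos hγ (k := -k) (by omega)]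
    · linarith [gCoef_neg_of_pos hγ h']

lemma aC_anti (hγ : γ ∈ Set.Ioo (1 : ℝ) 2) {k l : ℤ} (hk : k ≠ 0) (hl : |k| ≤ l) :
    aC γ l ≤ aC γ k := by
  have h0 : 0 < |k| := abs_pos.mpr hk
  have h1 := gCoef_mono hγ h0 hl
  have h2 : gCoef γ |k| = gCoef γ k := by
    rcases abs_choice k with h | h <;> rw [h]
    exact gCoef_neg _ _
  unfold aC
  rw [if_neg hk, if_neg (by omega)]
  linarith

lemma sum_aC (hγ : γ ∈ Set.Ioo (1 : ℝ) 2) (n : ℕ) :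
    ∑ m ∈ Finset.Icc (-(n : ℤ)) n, aC γ m
      = gCoef γ 0 + 2 / γ * ((γ / 2 + n + 1) * gCoef γ (n + 1)) := by
  have hg : γ ≠ 0 := by have := hγ.1; linarith
  induction n with
  | zero =>
    have := gCoef_rec hγ 0
    simp only [Int.cast_zero, add_zero, zero_sub, zero_add] at this
    simp [aC, this]
    field_simp
    ring
  | succ n ih =>
    have hs : Finset.Icc (-((n + 1 : ℕ) : ℤ)) ((n + 1 : ℕ) : ℤ)
        = insert (-((n : ℤ) + 1)) (insert ((n : ℤ) + 1) (Finset.Icc (-(n : ℤ)) n)) := by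
      ext x; simp only [Finset.mem_Icc, Finset.mem_insert]; push_cast; omega
    rw [hs, Finset.sum_insert (by simp; omega), Finset.sum_insert (by simp), ih, aC_neg]
    have := gCoef_rec hγ (n + 1)
    push_cast at this ⊢
    rw [this, aC, if_neg (by omega)]
    field_simp
    ring

lemma sum_aC_lt (hγ : γ ∈ Set.Ioo (1 : ℝ) 2) (n : ℕ) :
    ∑ m ∈ Finset.Icc (-(n : ℤ)) n, aC γ m < gCoef γ 0 := by
  rw [sum_aC hγ]
  have h1 := hγ.1
  have : 2 / γ * ((γ / 2 + n + 1) * gCoef γ (n + 1)) < 0 := by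
    apply mul_neg_of_pos_of_neg (by positivity)
    exact mul_neg_of_pos_of_neg (by positivity) (gCoef_succ_neg hγ n)
  linarith

lemma sCoef_eq (hγ : γ ∈ Set.Ioo (1 : ℝ) 2) (k : ℤ) :
    sCoef γ k = gCoef γ k + γ / 24 * (2 * gCoef γ k - gCoef γ (k - 1) - gCoef γ (k + 1)) := by
  have h : sCoef γ k = gCoef γ k *
      (1 + γ * (γ + 1) * (γ + 2) / (6 * (γ - 2 * k + 2) * (γ + 2 * k + 2))) := rfl
  have n2 : γ / 2 + k + 1 ≠ 0 := by
    have := half_ne hγ (k + 1); push_cast at this; rwa [← add_assoc] at this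
  have n1 : γ / 2 - k + 1 ≠ 0 := by
    have := half_ne hγ (-k + 1); push_cast at this; rwa [← add_assoc, ← sub_eq_add_neg] at this
  have r1 := gCoef_rec hγ k
  have r2 := gCoef_rec hγ (k - 1)
  rw [sub_add_cancel] at r2
  push_cast at r2
  have e1 : gCoef γ (k + 1) = (k - γ / 2) * gCoef γ k / (γ / 2 + k + 1) := by
    rw [eq_div_iff n2]; linarith
  have e2 : gCoef γ (k - 1) = - (γ / 2 + k) * gCoef γ k / (γ / 2 - k + 1) := by
    rw [eq_div_iff n1]; linarith
  have m1 : γ - 2 * k + 2 ≠ 0 := by intro h; apply n1; linarith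
  have m2 : γ + 2 * k + 2 ≠ 0 := by intro h; apply n2; linarith
  rw [h, e1, e2]
  have q1 : γ / 2 - k + 1 = (γ - 2 * k + 2) / 2 := by ring
  have q2 : γ / 2 + k + 1 = (γ + 2 * k + 2) / 2 := by ring
  rw [q1, q2]
  field_simp
  ring

end scalar

section general

lemma diag_dom_form {n : ℕ} (M : Matrix (Fin n) (Fin n) ℝ) (hM : M.IsSymm) (y : Fin n → ℝ) :
    ∑ i, (M i i - ∑ j, if j = i then 0 else |M i j|) * y i ^ 2 ≤ y ⬝ᵥ M *ᵥ y := by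
  have key : ∀ i j, (if j = i then M i i * y i ^ 2 else 0)
      - (if j = i then 0 else |M i j|) * y i ^ 2 / 2
      - (if i = j then 0 else |M j i|) * y j ^ 2 / 2 ≤ y i * (M i j * y j) := by
    intro i j
    by_cases h : j = i
    · subst h; simp; nlinarith
    · have hs : M j i = M i j := hM.apply i j
      simp only [if_neg h, if_neg (Ne.symm h), hs]
      have h1 : -(|M i j| * (|y i| * |y j|)) ≤ y i * (M i j * y j) := by
        have := neg_abs_le (y i * (M i j * y j))
        rw [abs_mul, abs_mul] at this
        linarith
      have h2 : |y i| * |y j| ≤ (y i ^ 2 + y j ^ 2) / 2 := by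
        nlinarith [sq_nonneg (|y i| - |y j|), sq_abs (y i), sq_abs (y j)]
      nlinarith [mul_le_mul_of_nonneg_left h2 (abs_nonneg (M i j))]
  have hsum := Finset.sum_le_sum fun i (_ : i ∈ Finset.univ) =>
    Finset.sum_le_sum fun j (_ : j ∈ Finset.univ) => key i j
  simp only [dotProduct, mulVec, Finset.mul_sum]
  refine le_trans (le_of_eq ?_) hsum
  simp only [Finset.sum_sub_distrib]
  have hc : ∑ i, ∑ j, (if i = j then 0 else |M j i|) * y j ^ 2 / 2
      = ∑ i, ∑ j, (if j = i then 0 else |M i j|) * y i ^ 2 / 2 := Finset.sum_comm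
  rw [hc, sub_sub, ← Finset.sum_add_distrib, ← Finset.sum_sub_distrib]
  refine Finset.sum_congr rfl fun i _ => ?_
  rw [← Finset.sum_div, add_halves, ← Finset.sum_mul, sub_mul]
  simp

lemma posDef_of_dom {n : ℕ} (M : Matrix (Fin n) (Fin n) ℝ) (hM : M.IsSymm)
    (h : ∀ i, (∑ j, if j = i then 0 else |M i j|) < M i i) : M.PosDef := by
  refine PosDef.of_dotProduct_mulVec_pos (by rw [IsHermitian, conjTranspose_eq_transpose_of_trivial]; exact hM) fun y hy => ?_
  rw [star_trivial]
  refine lt_of_lt_of_le ?_ (diag_dom_form M hM y)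
  obtain ⟨i, hi⟩ := Function.ne_iff.mp hy
  refine Finset.sum_pos' (fun j _ => mul_nonneg (by linarith [h j]) (sq_nonneg _))
    ⟨i, Finset.mem_univ _, mul_pos (by linarith [h i]) (by simp at hi; positivity)⟩

lemma posSemidef_of_dom {n : ℕ} (M : Matrix (Fin n) (Fin n) ℝ) (hM : M.IsSymm)
    (h : ∀ i, (∑ j, if j = i then 0 else |M i j|) ≤ M i i) : M.PosSemidef := by
  refine PosSemidef.of_dotProduct_mulVec_nonneg (by rw [IsHermitian, conjTranspose_eq_transpose_of_trivial]; exact hM) fun y => ?_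
  rw [star_trivial]
  refine le_trans ?_ (diag_dom_form M hM y)
  exact Finset.sum_nonneg fun j _ => mul_nonneg (by linarith [h j]) (sq_nonneg _)

open scoped MatrixOrder in
lemma posSemidef_mul_of_commute {n : ℕ} {A B : Matrix (Fin n) (Fin n) ℝ} (hA : A.PosSemidef)
    (hB : B.PosSemidef) (h : Commute A B) : (A * B).PosSemidef :=
  (Commute.mul_nonneg hA.nonneg hB.nonneg h).posSemidef

end general

section matrices

variable {γ : ℝ}

/-- truncated coefficients -/
noncomputable def Ft (γ : ℝ) (N : ℕ) (m : ℤ) : ℝ := if |m| < N then gCoef γ m else 0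

lemma Ft_neg (γ : ℝ) (N : ℕ) (m : ℤ) : Ft γ N (-m) = Ft γ N m := by
  simp [Ft, gCoef_neg]

/-- truncated nonnegative off-diagonal coefficients -/
noncomputable def bC (γ : ℝ) (N : ℕ) (m : ℤ) : ℝ := if |m| < N then aC γ m else 0

lemma bC_neg (γ : ℝ) (N : ℕ) (m : ℤ) : bC γ N (-m) = bC γ N m := by
  simp [bC, aC_neg]

lemma bC_nonneg (hγ : γ ∈ Set.Ioo (1 : ℝ) 2) (N : ℕ) (m : ℤ) : 0 ≤ bC γ N m := by
  unfold bC; split_ifs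
  · exact aC_nonneg hγ m
  · exact le_rfl

lemma sum_bC_lt {ι : Type*} [Fintype ι] (hγ : γ ∈ Set.Ioo (1 : ℝ) 2) (N : ℕ) (φ : ι → ℤ)
    (hφ : Function.Injective φ) : ∑ p, bC γ N (φ p) < gCoef γ 0 := by
  classical
  refine lt_of_le_of_lt ?_ (sum_aC_lt hγ N)
  rw [← Finset.sum_image (s := Finset.univ) (g := φ) (f := bC γ N) (fun a _ b _ h => hφ h)]
  calc ∑ x ∈ Finset.univ.image φ, bC γ N x
      = ∑ x ∈ (Finset.univ.image φ).filter (fun x : ℤ => |x| < (N : ℤ)), aC γ x := by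
        rw [Finset.sum_filter]; rfl
    _ ≤ _ := by
        apply Finset.sum_le_sum_of_subset_of_nonneg
        · intro x hx
          rw [Finset.mem_filter] at hx
          rw [Finset.mem_Icc]
          have := abs_lt.mp hx.2
          omega
        · intro x _ _; exact aC_nonneg hγ x

/-- the Hankel correction -/
noncomputable def Hk (γ : ℝ) (N : ℕ) : Matrix (Fin N) (Fin N) ℝ :=
  fun i j => -(bC γ N ((i : ℤ) + j + 2) + bC γ N (2 * N - i - j))

lemma Ft_eq (N : ℕ) {m : ℤ} (hm : m ≠ 0) : Ft γ N m = -bC γ N m := by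
  simp only [Ft, bC, aC, if_neg hm]; split_ifs <;> simp

lemma tau_entry (γ : ℝ) (N : ℕ) (i j : Fin N) :
    tauAhat γ N i j
      = Ft γ N ((i : ℤ) - j) - Ft γ N ((i : ℤ) + j + 2) - Ft γ N (2 * N - i - j) := by
  have hi := i.2
  have hj := j.2
  unfold tauAhat tauOf Ft
  have e1 : gCoef γ (((i : ℤ) - (j : ℤ)).natAbs : ℤ) = gCoef γ ((i : ℤ) - j) := by
    rw [Int.natCast_natAbs]
    rcases abs_choice ((i : ℤ) - j) with h | h <;> rw [h]
    exact gCoef_neg _ _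
  have e2 : (((i : ℕ) + 1 + ((j : ℕ) + 1) : ℕ) : ℤ) = (i : ℤ) + j + 2 := by push_cast; ring
  have e3 : ((2 * (N + 1) - ((i : ℕ) + 1) - ((j : ℕ) + 1) : ℕ) : ℤ) = 2 * N - i - j := by omega
  simp only [e1, e2, e3]
  congr 1
  · congr 1
    · congr 1
      rw [← Int.natCast_natAbs, Nat.cast_lt]
    · congr 1
      rw [abs_of_nonneg (by omega), ← e2, Nat.cast_lt]
  · congr 1
    rw [abs_of_nonneg (by omega), ← e3, Nat.cast_lt]

lemma tau_eq (γ : ℝ) (N : ℕ) : tauAhat γ N = Ahat γ N - Hk γ N := by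
  ext i j
  have hi := i.2
  have hj := j.2
  rw [tau_entry, Ft_eq N (m := (i : ℤ) + j + 2) (by omega),
    Ft_eq N (m := 2 * N - (i : ℤ) - j) (by omega)]
  have : Ft γ N ((i : ℤ) - j) = Ahat γ N i j := by
    rw [Ft, if_pos (by rw [abs_lt]; omega)]; rfl
  rw [this, Matrix.sub_apply, Hk]
  ring

lemma Ahat_symm (γ : ℝ) (N : ℕ) : (Ahat γ N).IsSymm := by
  ext i j
  rw [transpose_apply, Ahat, ← gCoef_neg]
  congr 1; ring

lemma Hk_symm (γ : ℝ) (N : ℕ) : (Hk γ N).IsSymm := by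
  ext i j
  rw [transpose_apply, Hk, Hk]
  congr 3 <;> ring

lemma Ahat_diag (γ : ℝ) (N : ℕ) (i : Fin N) : Ahat γ N i i = gCoef γ 0 := by
  simp [Ahat]

lemma Ahat_off (γ : ℝ) (N : ℕ) {i j : Fin N} (h : j ≠ i) :
    Ahat γ N i j = -bC γ N ((i : ℤ) - j) := by
  have hi := i.2
  have hj := j.2
  rw [bC, if_pos (by rw [abs_lt]; omega), aC, if_neg (by intro h'; apply h; ext; omega), neg_neg]
  rfl

lemma Ahat_posSemidef (hγ : γ ∈ Set.Ioo (1 : ℝ) 2) (N : ℕ) : (Ahat γ N).PosSemidef := by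
  apply posSemidef_of_dom _ (Ahat_symm γ N)
  intro i
  rw [Ahat_diag]
  refine le_trans (Finset.sum_le_sum (g := fun j : Fin N => bC γ N ((i : ℤ) - j)) ?_)
    (sum_bC_lt hγ N (fun j : Fin N => (i : ℤ) - j) ?_).le
  · intro j _
    split_ifs with h
    · exact bC_nonneg hγ _ _
    · rw [Ahat_off γ N h, abs_neg, abs_of_nonneg (bC_nonneg hγ _ _)]
  · intro a b h
    ext; simp at h; omega

lemma row_bound (hγ : γ ∈ Set.Ioo (1 : ℝ) 2) (N : ℕ) (i : Fin N) :
    ∑ j : Fin N, (bC γ N ((i : ℤ) - j) - Hk γ N i j) < gCoef γ 0 := by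
  have hi := i.2
  have := sum_bC_lt hγ N (ι := Fin N ⊕ Fin N ⊕ Fin N)
    (Sum.elim (fun j => (i : ℤ) - j)
      (Sum.elim (fun j => (i : ℤ) + j + 2) (fun j => -(2 * N - i - j)))) (by
      rintro (a | a | a) (b | b | b) h <;> have ha := a.2 <;> have hb := b.2 <;>
        simp only [Sum.elim_inl, Sum.elim_inr] at h <;>
        first
        | (exfalso; omega)
        | (congr; ext; omega))
  simp only [Fintype.sum_sum_type, Sum.elim_inl, Sum.elim_inr, bC_neg] at this
  simp only [Hk, sub_neg_eq_add, Finset.sum_add_distrib]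
  exact this

lemma Hk_nonpos (hγ : γ ∈ Set.Ioo (1 : ℝ) 2) (N : ℕ) (i j : Fin N) : Hk γ N i j ≤ 0 := by
  have h1 := bC_nonneg hγ N ((i : ℤ) + j + 2)
  have h2 := bC_nonneg hγ N (2 * N - i - j)
  unfold Hk; linarith

lemma Hk_bound (hγ : γ ∈ Set.Ioo (1 : ℝ) 2) (N : ℕ) {i j : Fin N} (h : j ≠ i) :
    -Hk γ N i j ≤ bC γ N ((i : ℤ) - j) := by
  have hi := i.2
  have hj := j.2
  have hne : (i : ℤ) - j ≠ 0 := by intro h'; apply h; ext; omega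
  have hb := bC_nonneg hγ N ((i : ℤ) - j)
  have e : bC γ N ((i : ℤ) - j) = aC γ ((i : ℤ) - j) := by
    rw [bC, if_pos (by rw [abs_lt]; omega)]
  rw [Hk, neg_neg]
  by_cases h1 : |(i : ℤ) + j + 2| < N
  · have h1' := abs_lt.mp h1
    have : ¬ |2 * (N : ℤ) - i - j| < N := by rw [abs_lt]; omega
    rw [e, bC, bC, if_pos h1, if_neg this, add_zero]
    exact aC_anti hγ hne (by rw [abs_le]; omega)
  · rw [bC, if_neg h1, zero_add]
    by_cases h2 : |2 * (N : ℤ) - i - j| < N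
    · rw [e, bC, if_pos h2]
      exact aC_anti hγ hne (by rw [abs_le]; omega)
    · rw [bC, if_neg h2]; exact hb

lemma comb_posDef (hγ : γ ∈ Set.Ioo (1 : ℝ) 2) (N : ℕ) (c : ℝ) (hc : c = 1 ∨ c = -3) :
    (Ahat γ N + c • Hk γ N).PosDef := by
  apply posDef_of_dom
  · exact (Ahat_symm γ N).add ((Hk_symm γ N).smul c)
  · intro i
    have hrow := row_bound hγ N i
    have hle : (∑ j, if j = i then 0 else |(Ahat γ N + c • Hk γ N) i j|)
        ≤ ∑ j : Fin N, ((bC γ N ((i : ℤ) - j) - Hk γ N i j) + if j = i then Hk γ N i i else 0) := by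
      refine Finset.sum_le_sum fun j _ => ?_
      split_ifs with h
      · subst h
        have := bC_nonneg hγ N ((j : ℤ) - j)
        linarith
      · rw [Matrix.add_apply, Matrix.smul_apply, smul_eq_mul, Ahat_off γ N h, add_zero, abs_le]
        have h1 := Hk_bound hγ N h
        have h2 := Hk_nonpos hγ N i j
        rcases hc with rfl | rfl <;> constructor <;> linarith
    rw [Finset.sum_add_distrib, Finset.sum_ite_eq' Finset.univ i, if_pos (Finset.mem_univ i)] at hle
    rw [Matrix.add_apply, Matrix.smul_apply, smul_eq_mul, Ahat_diag]
    have h2 := Hk_nonpos hγ N i i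
    rcases hc with rfl | rfl <;> linarith

lemma tri_symm (N : ℕ) : (triDiag N).IsSymm := by
  ext i j
  rw [transpose_apply, triDiag, triDiag]
  simp only [eq_comm (a := (j : ℤ))]
  rw [← Int.natAbs_neg, neg_sub]

lemma tri_mul (N : ℕ) (u : ℤ → ℝ) (h0 : u (-1) = 0) (hN : u N = 0) (i : Fin N) :
    ∑ k : Fin N, triDiag N i k * u k = 2 * u i - u (i - 1) - u (i + 1) := by
  have hi := i.2
  have key : ∀ k : Fin N, triDiag N i k * u k
      = (if k = i then 2 * u i else 0) - (if (k : ℤ) = i - 1 then u (i - 1) else 0)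
        - (if (k : ℤ) = i + 1 then u (i + 1) else 0) := by
    intro k
    rw [triDiag]
    by_cases h1 : k = i
    · subst h1
      rw [if_pos rfl, if_pos rfl, if_neg (by omega), if_neg (by omega)]; ring
    · have h1' : (k : ℤ) ≠ i := by intro h'; apply h1; ext; omega
      rw [if_neg h1, if_neg h1'.symm]
      by_cases h2 : (k : ℤ) = i - 1
      · rw [if_pos (by omega), if_pos h2, if_neg (by omega), h2]; ring
      · by_cases h3 : (k : ℤ) = i + 1
        · rw [if_pos (by omega), if_neg h2, if_pos h3, h3]; ring
        · rw [if_neg (by omega), if_neg h2, if_neg h3]; ring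
  simp only [key, Finset.sum_sub_distrib]
  rw [Finset.sum_ite_eq' Finset.univ i, if_pos (Finset.mem_univ i)]
  congr 1
  · congr 1
    by_cases h : (i : ℕ) = 0
    · have : (i : ℤ) - 1 = -1 := by omega
      rw [this, h0]; simp
    · rw [Finset.sum_eq_single (⟨(i : ℕ) - 1, by omega⟩ : Fin N)]
      · rw [if_pos]; simp; omega
      · intro b _ hb
        rw [if_neg]; intro h'; apply hb; ext; simp; omega
      · simp
  · by_cases h : (i : ℕ) + 1 = N
    · have : (i : ℤ) + 1 = N := by omega
      rw [this, hN]; simp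
    · rw [Finset.sum_eq_single (⟨(i : ℕ) + 1, by omega⟩ : Fin N)]
      · rw [if_pos]; simp
      · intro b _ hb
        rw [if_neg]; intro h'; apply hb; ext; simp; omega
      · simp

lemma tau_symm (γ : ℝ) (N : ℕ) : (tauAhat γ N).IsSymm := by
  rw [tau_eq]; exact (Ahat_symm γ N).sub (Hk_symm γ N)

/-- integer extension of the entries -/
noncomputable def tz (γ : ℝ) (N : ℕ) (i j : ℤ) : ℝ :=
  Ft γ N (i - j) - Ft γ N (i + j + 2) - Ft γ N (2 * N - i - j)

lemma tri_tau (γ : ℝ) (N : ℕ) (i j : Fin N) : (triDiag N * tauAhat γ N) i j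
    = 2 * tz γ N i j - tz γ N (i - 1) j - tz γ N (i + 1) j := by
  have hj := j.2
  rw [mul_apply, ← tri_mul N (fun i => tz γ N i j)]
  · refine Finset.sum_congr rfl fun k _ => ?_
    rw [tau_entry]; rfl
  · simp only [tz]
    rw [← Ft_neg, Ft, Ft, Ft, if_neg (c := |2 * (N : ℤ) - -1 - j| < N) (by rw [abs_lt]; omega)]
    rw [show -(-1 - (j : ℤ)) = -1 + j + 2 by ring]; ring
  · simp only [tz]
    rw [Ft, Ft, Ft, if_neg (c := |(N : ℤ) + j + 2| < N) (by rw [abs_lt]; omega)]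
    rw [show 2 * (N : ℤ) - N - j = N - j by ring]; ring

lemma tri_commute (γ : ℝ) (N : ℕ) : Commute (triDiag N) (tauAhat γ N) := by
  have hsym : (triDiag N * tauAhat γ N).IsSymm := by
    ext i j
    rw [transpose_apply, tri_tau, tri_tau]
    simp only [tz]
    have e1 : Ft γ N ((j : ℤ) - i) = Ft γ N (i - j) := by rw [← Ft_neg]; congr 1; ring
    have e2 : Ft γ N ((j : ℤ) - 1 - i) = Ft γ N (i + 1 - j) := by rw [← Ft_neg]; congr 1; ring
    have e3 : Ft γ N ((j : ℤ) + 1 - i) = Ft γ N (i - 1 - j) := by rw [← Ft_neg]; congr 1; ring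
    rw [e1, e2, e3]
    ring_nf
  have h2 : (triDiag N * tauAhat γ N)ᵀ = triDiag N * tauAhat γ N := hsym
  rw [transpose_mul, tri_symm N, tau_symm γ N] at h2
  exact h2.symm

lemma tri_row (N : ℕ) (i : Fin N) : (∑ j, if j = i then 0 else |triDiag N i j|) ≤ 2 := by
  have : ∀ j : Fin N, (if j = i then 0 else |triDiag N i j|)
      ≤ (if (j : ℤ) ∈ ({(i : ℤ) - 1, (i : ℤ) + 1} : Finset ℤ) then 1 else 0) := by
    intro j
    by_cases h : j = i
    · rw [if_pos h]; split_ifs <;> norm_num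
    · have h1' : (j : ℤ) ≠ i := by intro h'; apply h; ext; omega
      rw [if_neg h, triDiag, if_neg h1'.symm]
      by_cases h2 : ((i : ℤ) - j).natAbs = 1
      · rw [if_pos h2, if_pos (by simp; omega)]; norm_num
      · rw [if_neg h2]; split_ifs <;> norm_num
  refine (Finset.sum_le_sum fun j _ => this j).trans ?_
  rw [← Finset.sum_image (s := Finset.univ) (g := fun j : Fin N => (j : ℤ))
    (f := fun x => if x ∈ ({(i : ℤ) - 1, (i : ℤ) + 1} : Finset ℤ) then (1 : ℝ) else 0)
    (fun a _ b _ h => by ext; simpa using h)]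
  rw [Finset.sum_ite_mem]
  simp only [Finset.sum_const, nsmul_eq_mul, mul_one]
  have h3 := (Finset.card_le_card (Finset.inter_subset_right
    (s₁ := Finset.univ.image (fun j : Fin N => (j : ℤ)))
    (s₂ := ({(i : ℤ) - 1, (i : ℤ) + 1} : Finset ℤ)))).trans Finset.card_le_two
  exact_mod_cast h3

lemma tri_posSemidef (N : ℕ) : (triDiag N).PosSemidef := by
  apply posSemidef_of_dom _ (tri_symm N)
  intro i
  rw [triDiag, if_pos rfl]
  exact tri_row N i

lemma four_sub_tri_posSemidef (N : ℕ) : ((4 : ℝ) • 1 - triDiag N).PosSemidef := by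
  apply posSemidef_of_dom
  · exact (isSymm_one.smul 4).sub (tri_symm N)
  intro i
  have h := tri_row N i
  have hd : triDiag N i i = 2 := by rw [triDiag, if_pos rfl]
  rw [Matrix.sub_apply, Matrix.smul_apply, one_apply_eq, hd]
  refine le_trans (le_of_eq ?_) (h.trans (by norm_num))
  refine Finset.sum_congr rfl fun j _ => ?_
  split_ifs with h'
  · rfl
  · rw [Matrix.sub_apply, Matrix.smul_apply, one_apply_ne (Ne.symm h')]; simp

/-- rectangular difference (or sum) matrix -/
def Bm (N : ℕ) (e : ℝ) : Matrix (Fin (N + 1)) (Fin N) ℝ :=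
  fun k i => (if k = i.castSucc then 1 else 0) + e * (if k = i.succ then 1 else 0)

lemma Bm_entry (γ : ℝ) (N : ℕ) (e : ℝ) (i j : Fin N) :
    ((Bm N e)ᵀ * Ahat γ (N + 1) * Bm N e) i j
      = (1 + e ^ 2) * gCoef γ ((i : ℤ) - j)
        + e * (gCoef γ ((i : ℤ) - j - 1) + gCoef γ ((i : ℤ) - j + 1)) := by
  simp only [mul_apply, transpose_apply, Bm, mul_add, add_mul, Finset.sum_add_distrib,
    ite_mul, mul_ite, mul_one, mul_zero, zero_mul, one_mul, Finset.sum_ite_eq', Finset.mem_univ,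
    if_true, Ahat, Fin.val_castSucc, Fin.val_succ]
  push_cast
  rw [show (i : ℤ) + 1 - (j + 1) = i - j by ring, show (i : ℤ) + 1 - j = i - j + 1 by ring,
    show (i : ℤ) - (j + 1) = i - j - 1 by ring]
  ring

lemma Bm_posSemidef (hγ : γ ∈ Set.Ioo (1 : ℝ) 2) (N : ℕ) (e : ℝ) :
    ((Bm N e)ᵀ * Ahat γ (N + 1) * Bm N e).PosSemidef := by
  have := (Ahat_posSemidef hγ (N + 1)).conjTranspose_mul_mul_same (Bm N e)
  rwa [conjTranspose_eq_transpose_of_trivial] at this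

lemma A_eq_low (hγ : γ ∈ Set.Ioo (1 : ℝ) 2) (N : ℕ) :
    Amat γ N = Ahat γ N + (γ / 24) • ((Bm N (-1))ᵀ * Ahat γ (N + 1) * Bm N (-1)) := by
  ext i j
  rw [Matrix.add_apply, Matrix.smul_apply, Bm_entry, Amat, Ahat, sCoef_eq hγ, smul_eq_mul]
  ring

lemma A_eq_high (hγ : γ ∈ Set.Ioo (1 : ℝ) 2) (N : ℕ) :
    Amat γ N + (γ / 24) • ((Bm N 1)ᵀ * Ahat γ (N + 1) * Bm N 1) = (1 + γ / 6) • Ahat γ N := by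
  ext i j
  rw [Matrix.add_apply, Matrix.smul_apply, Matrix.smul_apply, Bm_entry, Amat, Ahat, sCoef_eq hγ, smul_eq_mul,
    smul_eq_mul]
  ring

end matrices

theorem stmt_17 (γ : ℝ) (hγ : γ ∈ Set.Ioo (1 : ℝ) 2) (N : ℕ) (hN : 1 ≤ N) :
    (Pmat γ N).IsSymm ∧ (Pmat γ N).PosDef ∧
    (∀ y : Fin N → ℝ, y ≠ 0 →
      (3 / 8) * (y ⬝ᵥ Pmat γ N *ᵥ y) < y ⬝ᵥ Amat γ N *ᵥ y ∧
      y ⬝ᵥ Amat γ N *ᵥ y < 2 * (y ⬝ᵥ Pmat γ N *ᵥ y)) ∧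
    (∀ (μ : ℝ) (v : Fin N → ℝ), v ≠ 0 →
      ((Pmat γ N)⁻¹ * Amat γ N) *ᵥ v = μ • v → 3 / 8 < μ ∧ μ < 2) := by

  have h1 := hγ.1
  have h2 := hγ.2
  -- commuting products
  have hc := tri_commute γ N
  have hq1 := fun y => (comb_posDef hγ N 1 (Or.inl rfl)).dotProduct_mulVec_pos (x := y)
  have hq3 := fun y => (comb_posDef hγ N (-3) (Or.inr rfl)).dotProduct_mulVec_pos (x := y)
  simp only [star_trivial, add_mulVec, smul_mulVec, dotProduct_add, dotProduct_smul,
    smul_eq_mul] at hq1 hq3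
  have htau : ∀ y, y ⬝ᵥ tauAhat γ N *ᵥ y = y ⬝ᵥ Ahat γ N *ᵥ y - y ⬝ᵥ Hk γ N *ᵥ y := by
    intro y; rw [tau_eq, sub_mulVec, dotProduct_sub]
  have htauPD : (tauAhat γ N).PosDef := by
    refine PosDef.of_dotProduct_mulVec_pos
      (by rw [IsHermitian, conjTranspose_eq_transpose_of_trivial]; exact tau_symm γ N)
      fun y hy => ?_
    rw [star_trivial, htau]
    have := hq1 y hy
    have := hq3 y hy
    linarith
  have hT : (triDiag N * tauAhat γ N).PosSemidef :=
    posSemidef_mul_of_commute (tri_posSemidef N) htauPD.posSemidef hc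
  have hT4 : (((4 : ℝ) • 1 - triDiag N) * tauAhat γ N).PosSemidef :=
    posSemidef_mul_of_commute (four_sub_tri_posSemidef N) htauPD.posSemidef
      (((Commute.one_left _).smul_left 4).sub_left hc)
  have hP : Pmat γ N = tauAhat γ N + (γ / 24) • (triDiag N * tauAhat γ N) := by
    rw [Pmat, Qmat, add_mul, one_mul, smul_mul_assoc]
  have hPD : (Pmat γ N).PosDef := by
    rw [hP]
    exact htauPD.add_posSemidef (hT.smul (by linarith))
  have hform : ∀ y : Fin N → ℝ, y ≠ 0 →
      (3 / 8) * (y ⬝ᵥ Pmat γ N *ᵥ y) < y ⬝ᵥ Amat γ N *ᵥ y ∧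
      y ⬝ᵥ Amat γ N *ᵥ y < 2 * (y ⬝ᵥ Pmat γ N *ᵥ y) := by
    intro y hy
    have k1 := hq1 y hy
    have k3 := hq3 y hy
    have kt := htau y
    have t1 := hT.dotProduct_mulVec_nonneg y
    have t4 := hT4.dotProduct_mulVec_nonneg y
    have b1 := (Bm_posSemidef hγ N (-1)).dotProduct_mulVec_nonneg y
    have b2 := (Bm_posSemidef hγ N 1).dotProduct_mulVec_nonneg y
    have tp := htauPD.dotProduct_mulVec_pos hy
    have aL := congrArg (fun M => y ⬝ᵥ M *ᵥ y) (A_eq_low hγ N)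
    have aH := congrArg (fun M => y ⬝ᵥ M *ᵥ y) (A_eq_high hγ N)
    have pE := congrArg (fun M => y ⬝ᵥ M *ᵥ y) hP
    rw [sub_mul, smul_mul_assoc, one_mul] at t4
    simp only [star_trivial, add_mulVec, sub_mulVec, smul_mulVec, dotProduct_add, dotProduct_sub,
      dotProduct_smul, smul_eq_mul] at t1 t4 b1 b2 tp aL aH pE
    generalize y ⬝ᵥ Pmat γ N *ᵥ y = p at *
    generalize y ⬝ᵥ Amat γ N *ᵥ y = a at *
    generalize y ⬝ᵥ Ahat γ N *ᵥ y = ah at *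
    generalize y ⬝ᵥ tauAhat γ N *ᵥ y = t at *
    generalize y ⬝ᵥ Hk γ N *ᵥ y = h at *
    generalize y ⬝ᵥ (triDiag N * tauAhat γ N) *ᵥ y = w at *
    have g0 : 0 ≤ γ / 24 := by linarith
    have m1 := mul_nonneg g0 t1
    have m2 := mul_nonneg g0 (sub_nonneg.mpr (sub_nonneg.mp t4))
    have m3 := mul_nonneg g0 b1
    have m4 := mul_nonneg g0 b2
    have m5 : γ * t < 2 * t := mul_lt_mul_of_pos_right h2 tp
    have m6 : γ * ah < 2 * ah := mul_lt_mul_of_pos_right h2 (by linarith)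
    constructor <;> nlinarith
  refine ⟨?_, hPD, hform, ?_⟩
  · have := hPD.isHermitian
    rwa [IsHermitian, conjTranspose_eq_transpose_of_trivial] at this
  · intro μ v hv hμ
    have hdet : IsUnit (Pmat γ N).det := hPD.det_pos.ne'.isUnit
    have e : Amat γ N *ᵥ v = μ • (Pmat γ N *ᵥ v) := by
      rw [← mulVec_smul, ← hμ, mulVec_mulVec, ← mul_assoc, mul_nonsing_inv _ hdet, one_mul]
    obtain ⟨f1, f2⟩ := hform v hv
    rw [e, dotProduct_smul, smul_eq_mul] at f1 f2
    have hp := hPD.dotProduct_mulVec_pos hv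
    rw [star_trivial] at hp
    exact ⟨lt_of_mul_lt_mul_right f1 hp.le, lt_of_mul_lt_mul_right f2 hp.le⟩
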